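/- Fix z ∈ ℂ. Let f = (f₊, f₋, f₀) : ℝ → ℂ³ be differentiable and satisfy, for all t ∈ ℝ: −i f₊'(t) = f₊(t) + (z/√2) f₀(t), −i f₋'(t) = −f₋(t) + (conj(z)/√2) f₀(t), and −i (f₀(t) + 2t f₀'(t)) = (conj(z)/√2) f₊(t) + (z/√2) f₋(t). Then v : ℝ → ℂ³ defined by v(s) = (f₊(s²/2), f₋(s²/2), s·f₀(s²/2)) is a solution of the pseudo Jahn–Teller system −i v'(s) = V_PJT(s,z) v(s). -/

import Mathlib

/-!
Put `t = s ^ 2 / 2`, so that `dt/ds = s` and `2 * t = s ^ 2`. By the chain rule the equations for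
`f₊` and `f₋` get multiplied by `s`: this produces the diagonal entries `±s` of `V_PJT`, while in
the coupling to `f₀` the factor `s` is absorbed into the third component `s * f₀`. The derivative
of that component is `f₀ + s ^ 2 * f₀' = f₀ + 2 * t * f₀'`, the bracket in the third equation.
As `t` ranges over `[0, ∞)`, one-sided derivatives of `f` on that half-line carry the argument.
-/

open Matrix

/-- The pseudo Jahn–Teller matrix `V_PJT(s,z)`: the 3×3 Hermitian complex matrix with rows
`(s, 0, z/√2)`, `(0, −s, conj(z)/√2)`, `(conj(z)/√2, z/√2, 0)`. -/
noncomputable def VPJT (s : ℝ) (z : ℂ) : Matrix (Fin 3) (Fin 3) ℂ :=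
  !![(s : ℂ), 0, z / (Real.sqrt 2 : ℂ);
     0, -(s : ℂ), (starRingEnd ℂ) z / (Real.sqrt 2 : ℂ);
     (starRingEnd ℂ) z / (Real.sqrt 2 : ℂ), z / (Real.sqrt 2 : ℂ), 0]

lemma VPJT_mulVec (s : ℝ) (z a b c : ℂ) :
    VPJT s z *ᵥ ![a, b, c] =
      ![s * a + z / (Real.sqrt 2 : ℂ) * c,
        -s * b + (starRingEnd ℂ) z / (Real.sqrt 2 : ℂ) * c,
        (starRingEnd ℂ) z / (Real.sqrt 2 : ℂ) * a + z / (Real.sqrt 2 : ℂ) * b] := by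
  ext i
  fin_cases i <;> simp [VPJT, mul_comm]

lemma neg_I_mul_eq_iff {a b : ℂ} : -Complex.I * a = b ↔ a = Complex.I * b := by
  rw [← Complex.inv_I, inv_mul_eq_iff_eq_mul₀ Complex.I_ne_zero]

lemma hasDerivAt_sq_div_two (s : ℝ) : HasDerivAt (fun r : ℝ ↦ r ^ 2 / 2) s s := by
  simpa using (hasDerivAt_pow 2 s).div_const 2

section SquareSubstitution

variable {E : Type*} [NormedAddCommGroup E] [NormedSpace ℝ E] {f : ℝ → E} {f' : E} {s : ℝ}

lemma hasDerivAt_comp_sq_div_two (hf : HasDerivWithinAt f f' (Set.Ici 0) (s ^ 2 / 2)) :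
    HasDerivAt (fun r : ℝ ↦ f (r ^ 2 / 2)) (s • f') s :=
  hf.scomp_hasDerivAt s (hasDerivAt_sq_div_two s) fun _ ↦ Set.mem_Ici.2 (by positivity)

lemma hasDerivAt_smul_comp_sq_div_two (hf : HasDerivWithinAt f f' (Set.Ici 0) (s ^ 2 / 2)) :
    HasDerivAt (fun r : ℝ ↦ r • f (r ^ 2 / 2)) (f (s ^ 2 / 2) + s ^ 2 • f') s := by
  simpa [smul_smul, ← sq, add_comm] using
    (hasDerivAt_id' s).fun_smul (hasDerivAt_comp_sq_div_two hf)

end SquareSubstitution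

lemma hasDerivAt_vec3 {𝕜 E : Type*} [NontriviallyNormedField 𝕜] [NormedAddCommGroup E]
    [NormedSpace 𝕜 E] {f g h : 𝕜 → E} {f' g' h' : E} {x : 𝕜}
    (hf : HasDerivAt f f' x) (hg : HasDerivAt g g' x) (hh : HasDerivAt h h' x) :
    HasDerivAt (fun y ↦ ![f y, g y, h y]) ![f', g', h'] x :=
  hf.finCons <| hg.finCons <| hh.finCons <| hasDerivAt_pi.2 fun i ↦ i.elim0

theorem VPJT_solution_of_even_system_general (z : ℂ) {fp fm f0 : ℝ → ℂ} {fp' fm' f0' : ℂ}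
    {s t : ℝ} (hst : s ^ 2 / 2 = t)
    (hfp : HasDerivWithinAt fp fp' (Set.Ici 0) t)
    (hfm : HasDerivWithinAt fm fm' (Set.Ici 0) t)
    (hf0 : HasDerivWithinAt f0 f0' (Set.Ici 0) t)
    (heqp : -Complex.I * fp' = fp t + (z / (Real.sqrt 2 : ℂ)) * f0 t)
    (heqm : -Complex.I * fm' = -fm t + ((starRingEnd ℂ) z / (Real.sqrt 2 : ℂ)) * f0 t)
    (heq0 : -Complex.I * (f0 t + 2 * (t : ℂ) * f0')
      = ((starRingEnd ℂ) z / (Real.sqrt 2 : ℂ)) * fp t + (z / (Real.sqrt 2 : ℂ)) * fm t) :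
    HasDerivAt (fun r : ℝ ↦ ![fp (r ^ 2 / 2), fm (r ^ 2 / 2), (r : ℂ) * f0 (r ^ 2 / 2)])
      (Complex.I • VPJT s z *ᵥ ![fp (s ^ 2 / 2), fm (s ^ 2 / 2), (s : ℂ) * f0 (s ^ 2 / 2)]) s := by
  subst hst
  rw [neg_I_mul_eq_iff] at heqp heqm heq0
  have two_mul_time : 2 * ((s ^ 2 / 2 : ℝ) : ℂ) = (s : ℂ) ^ 2 := by push_cast; ring
  rw [two_mul_time] at heq0
  have hv := hasDerivAt_vec3 (hasDerivAt_comp_sq_div_two hfp) (hasDerivAt_comp_sq_div_two hfm)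
    (hasDerivAt_smul_comp_sq_div_two hf0)
  simp only [Complex.real_smul, Complex.ofReal_pow, heqp, heqm, heq0] at hv
  convert hv using 1
  rw [VPJT_mulVec, smul_vec3]
  simp only [smul_eq_mul]
  congrm ![?_, ?_, _] <;> ring

/-- If `f = (f₊, f₋, f₀)` is differentiable and satisfies
`−i f₊' = f₊ + (z/√2) f₀`, `−i f₋' = −f₋ + (conj z/√2) f₀` and
`−i (f₀ + 2t f₀') = (conj z/√2) f₊ + (z/√2) f₋`, then
`v(s) = (f₊(s²/2), f₋(s²/2), s·f₀(s²/2))` solves `−i v' = V_PJT(s,z) v`. -/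
theorem VPJT_solution_of_even_system (z : ℂ) (fp fm f0 : ℝ → ℂ)
    (hfp : Differentiable ℝ fp) (hfm : Differentiable ℝ fm) (hf0 : Differentiable ℝ f0)
    (heqp : ∀ t : ℝ, -Complex.I * deriv fp t = fp t + (z / (Real.sqrt 2 : ℂ)) * f0 t)
    (heqm : ∀ t : ℝ, -Complex.I * deriv fm t
      = -fm t + ((starRingEnd ℂ) z / (Real.sqrt 2 : ℂ)) * f0 t)
    (heq0 : ∀ t : ℝ, -Complex.I * (f0 t + 2 * (t : ℂ) * deriv f0 t)
      = ((starRingEnd ℂ) z / (Real.sqrt 2 : ℂ)) * fp t + (z / (Real.sqrt 2 : ℂ)) * fm t) :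
    ∀ s : ℝ, HasDerivAt
      (fun s : ℝ => ![fp (s ^ 2 / 2), fm (s ^ 2 / 2), (s : ℂ) * f0 (s ^ 2 / 2)])
      (Complex.I • (VPJT s z).mulVec
        ![fp (s ^ 2 / 2), fm (s ^ 2 / 2), (s : ℂ) * f0 (s ^ 2 / 2)]) s := fun _ ↦
  VPJT_solution_of_even_system_general z rfl (hfp _).hasDerivAt.hasDerivWithinAt
    (hfm _).hasDerivAt.hasDerivWithinAt (hf0 _).hasDerivAt.hasDerivWithinAt
    (heqp _) (heqm _) (heq0 _)
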